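/- The category Z_f(G,α) of objects of Z(G,α) supported on the conjugacy class of f is equivalent, as a k-linear category, to the category of left modules over the twisted group algebra k[C_G(f), α(·,·|f)^{-1}], via the functor Z ↦ Z_f (taking the degree-f component). -/

import Mathlib

open CategoryTheory
open scoped BigOperators

/-- `α(g,h|f) = α(g,h,f)⁻¹ · α(g, hfh⁻¹, h) · α((gh)f(gh)⁻¹, g, h)⁻¹`. -/
def aux2 {G : Type} [Group G] {k : Type} [Field k]
    (α : G → G → G → kˣ) (g h f : G) : kˣ :=
  (α g h f)⁻¹ * α g (h * f * h⁻¹) h * (α ((g * h) * f * (g * h)⁻¹) g h)⁻¹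

variable (k : Type) [Field k] (G : Type) [Group G] [Fintype G]
  (α : G → G → G → kˣ) (f : G)

/-- An object of `Z_f(G,α)`: an object of `Z(G,α)` supported on the conjugacy class
of `f`. -/
structure ZfObj where
  V : Type
  [ac : AddCommGroup V]
  [mo : Module k V]
  p : G → V →ₗ[k] V
  p_idem : ∀ g, p g ∘ₗ p g = p g
  p_orth : ∀ g h, g ≠ h → p g ∘ₗ p h = 0
  p_total : ∑ g : G, p g = LinearMap.id
  ρ : G → V →ₗ[k] V
  ρ_one : ρ 1 = LinearMap.id
  ρ_bij : ∀ g, Function.Bijective (ρ g)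
  grade : ∀ g h, ρ g ∘ₗ p h = p (g * h * g⁻¹) ∘ₗ ρ g
  proj : ∀ g h x, ρ (g * h) ∘ₗ p x
    = ((aux2 α g h x : kˣ) : k) • ((ρ g ∘ₗ ρ h) ∘ₗ p x)
  supp : ∀ h : G, ¬ IsConj f h → p h = 0

attribute [instance] ZfObj.ac ZfObj.mo

variable {k G α f}

/-- A morphism of `Z_f(G,α)`: a linear map preserving the grading and the action. -/
@[ext]
structure ZfHom (Z W : ZfObj k G α f) where
  φ : Z.V →ₗ[k] W.V
  comm_p : ∀ h, φ ∘ₗ Z.p h = W.p h ∘ₗ φ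
  comm_ρ : ∀ g, φ ∘ₗ Z.ρ g = W.ρ g ∘ₗ φ

instance : Category (ZfObj k G α f) where
  Hom Z W := ZfHom Z W
  id Z := ⟨LinearMap.id, fun h => by simp, fun g => by simp⟩
  comp {Z W U} a b := ⟨b.φ ∘ₗ a.φ,
    fun h => by
      rw [LinearMap.comp_assoc, a.comm_p, ← LinearMap.comp_assoc, b.comm_p,
        LinearMap.comp_assoc],
    fun g => by
      rw [LinearMap.comp_assoc, a.comm_ρ, ← LinearMap.comp_assoc, b.comm_ρ,
        LinearMap.comp_assoc]⟩
  id_comp a := by apply ZfHom.ext; simp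
  comp_id a := by apply ZfHom.ext; simp
  assoc a b c := by apply ZfHom.ext; simp [LinearMap.comp_assoc]

/-- A module over the twisted group algebra `k[C_G(f), α(·,·|f)⁻¹]`: a vector space
`M` with operators `u_g`, `g ∈ C_G(f)`, satisfying `u_e = id` and
`u_g u_h = α(g,h|f)⁻¹ u_{gh}`. -/
structure RepObj (k : Type) [Field k] (G : Type) [Group G]
    (α : G → G → G → kˣ) (f : G) where
  M : Type
  [ac : AddCommGroup M]
  [mo : Module k M]
  u : Subgroup.centralizer {f} → M →ₗ[k] M
  u_one : u 1 = LinearMap.id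
  u_mul : ∀ g h : Subgroup.centralizer {f},
    u g ∘ₗ u h = (((aux2 α (g : G) (h : G) f)⁻¹ : kˣ) : k) • u (g * h)

attribute [instance] RepObj.ac RepObj.mo

/-- A morphism of modules over the twisted group algebra: a linear map commuting
with the operators `u_g`. -/
@[ext]
structure RepHom (M N : RepObj k G α f) where
  φ : M.M →ₗ[k] N.M
  comm_u : ∀ g, φ ∘ₗ M.u g = N.u g ∘ₗ φ

instance : Category (RepObj k G α f) where
  Hom M N := RepHom M N
  id M := ⟨LinearMap.id, fun g => by simp⟩
  comp {M N P} a b := ⟨b.φ ∘ₗ a.φ,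
    fun g => by
      rw [LinearMap.comp_assoc, a.comm_u, ← LinearMap.comp_assoc, b.comm_u,
        LinearMap.comp_assoc]⟩
  id_comp a := by apply RepHom.ext; simp
  comp_id a := by apply RepHom.ext; simp
  assoc a b c := by apply RepHom.ext; simp [LinearMap.comp_assoc]

/-- Elements of the centralizer of `f` preserve the degree-`f` component. -/
theorem mapsTo_range_p (Z : ZfObj k G α f) (g : Subgroup.centralizer {f}) :
    ∀ x ∈ LinearMap.range (Z.p f), Z.ρ (g : G) x ∈ LinearMap.range (Z.p f) := by
  intro x hx
  obtain ⟨y, rfl⟩ := hx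
  have hgf : (g : G) * f * (g : G)⁻¹ = f := by
    have := g.2 f (Set.mem_singleton f)
    rw [mul_inv_eq_iff_eq_mul, this]
  have := congrArg (fun (ψ : Z.V →ₗ[k] Z.V) => ψ y) (Z.grade (g : G) f)
  simp only [LinearMap.comp_apply] at this
  rw [this, hgf]
  exact ⟨_, rfl⟩

/-- A linear map preserving gradings restricts to degree-`f` components. -/
theorem mapsTo_range_hom {Z W : ZfObj k G α f} (a : ZfHom Z W) :
    ∀ x ∈ LinearMap.range (Z.p f), a.φ x ∈ LinearMap.range (W.p f) := by
  intro x hx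
  obtain ⟨y, rfl⟩ := hx
  have := congrArg (fun (ψ : Z.V →ₗ[k] W.V) => ψ y) (a.comm_p f)
  simp only [LinearMap.comp_apply] at this
  rw [this]
  exact ⟨_, rfl⟩

set_option maxHeartbeats 1000000 in
/-- The functor `Z ↦ Z_f` taking an object of `Z_f(G,α)` to its degree-`f`
component, a module over the twisted group algebra `k[C_G(f), α(·,·|f)⁻¹]`, and a
morphism to its restriction. -/
noncomputable def Dfun : ZfObj k G α f ⥤ RepObj k G α f where
  obj Z :=
    { M := LinearMap.range (Z.p f)
      u := fun g => (Z.ρ (g : G)).restrict (mapsTo_range_p Z g)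
      u_one := by
        ext x
        simp [LinearMap.restrict_apply, Z.ρ_one]
      u_mul := by
        intro g h
        ext ⟨x, hx⟩
        obtain ⟨y, rfl⟩ := hx
        have hproj := congrArg (fun (ψ : Z.V →ₗ[k] Z.V) => ψ (Z.p f y))
          (Z.proj (g : G) (h : G) f)
        simp only [LinearMap.comp_apply, LinearMap.smul_apply] at hproj
        have hidem : Z.p f (Z.p f y) = Z.p f y := by
          have := congrArg (fun (ψ : Z.V →ₗ[k] Z.V) => ψ y) (Z.p_idem f)
          simpa using this
        rw [hidem] at hproj
        simp only [LinearMap.comp_apply, LinearMap.smul_apply, LinearMap.restrict_apply,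
          SetLike.val_smul, Subgroup.coe_mul]
        rw [hproj, smul_smul, ← Units.val_mul, inv_mul_cancel, Units.val_one, one_smul] }
  map {Z W} a :=
    { φ := a.φ.restrict (mapsTo_range_hom a)
      comm_u := by
        intro g
        ext ⟨x, hx⟩
        have := congrArg (fun (ψ : Z.V →ₗ[k] W.V) => ψ x) (a.comm_ρ (g : G))
        simp only [LinearMap.comp_apply] at this
        simp only [LinearMap.comp_apply, LinearMap.restrict_apply]
        exact this }
  map_id Z := by
    apply RepHom.ext
    ext x
    rfl
  map_comp a b := by
    apply RepHom.ext
    ext x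
    rfl

/-!
For a homogeneous `v` of degree `x`, the twisting scalar of `ρ (g * h)` against `ρ g ∘ ρ h` is
the transgression `aux2 α g h x`, and the 3-cocycle identities for `α` make the transgression a
normalized 2-cocycle on the action groupoid of `G` acting on itself by conjugation.

An object `Z` is spanned by the translates `ρ c z` of its degree-`f` component `Z_f`, so a morphism
is determined by its restriction `ψ` to `Z_f`, and `ρ c z ↦ ρ c (ψ z)` is well defined because
`ψ` commutes with `ρ t` for `t` in the centralizer of `f`. A module `M` is the degree-`f`
component of a coinduced object, made of functions `G → M` that are equivariant under the
centralizer.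
-/

section Transgression

/-- A normalized 2-cocycle, with values in a commutative group `A`, on the action groupoid of `G`
acting on itself by conjugation: `τ g h x` is the value on the composable pair of arrows
`x ⟶ h x h⁻¹ ⟶ (g h) x (g h)⁻¹`. Transgressions of normalized
3-cocycles of `G` are of this kind. -/
structure IsNormalizedTwoCocycle {G A : Type*} [Group G] [CommGroup A]
    (τ : G → G → G → A) : Prop where
  cocycle : ∀ g h l x, τ (g * h) l x * τ g h (l * x * l⁻¹) = τ g (h * l) x * τ h l x
  one_left : ∀ h x, τ 1 h x = 1

theorem IsNormalizedTwoCocycle.one_right {G A : Type*} [Group G] [CommGroup A]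
    {τ : G → G → G → A} (hτ : IsNormalizedTwoCocycle τ) (g x : G) : τ g 1 x = 1 := by
  simpa [hτ.one_left] using hτ.cocycle g 1 1 x

variable {k : Type} [Field k] {G : Type} [Group G] {α : G → G → G → kˣ}

-- The identity is the alternating product of the four instances of the 3-cocycle identity obtained
-- by inserting the base point `x`, suitably conjugated, into the triple `(g, h, l)`.
theorem aux2_cocycle
    (hcoc : ∀ f g h l : G,
      α g h l * α f (g * h) l * α f g h = α (f * g) h l * α f g (h * l)) (g h l x : G) :
    aux2 α (g * h) l x * aux2 α g h (l * x * l⁻¹) = aux2 α g (h * l) x * aux2 α h l x := by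
  have insert_fourth := congrArg Additive.ofMul (hcoc g h l x)
  have insert_third := congrArg Additive.ofMul (hcoc g h (l * x * l⁻¹) l)
  have insert_second := congrArg Additive.ofMul (hcoc g (h * (l * x * l⁻¹) * h⁻¹) h l)
  have insert_first :=
    congrArg Additive.ofMul (hcoc (g * (h * (l * x * l⁻¹) * h⁻¹) * g⁻¹) g h l)
  apply Additive.ofMul.injective
  simp only [aux2, mul_assoc, mul_inv_rev, inv_mul_cancel, mul_one, ofMul_mul, ofMul_inv]
    at insert_fourth insert_third insert_second insert_first ⊢
  linear_combination (norm := abel) insert_fourth - insert_third + insert_second - insert_first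

theorem isNormalizedTwoCocycle_aux2
    (hcoc : ∀ f g h l : G,
      α g h l * α f (g * h) l * α f g h = α (f * g) h l * α f g (h * l))
    (hnorm : ∀ f g h : G, f = 1 ∨ g = 1 ∨ h = 1 → α f g h = 1) :
    IsNormalizedTwoCocycle (aux2 α) where
  cocycle := aux2_cocycle hcoc
  one_left h x := by simp [aux2, hnorm]

end Transgression

section Centralizer

variable {G : Type*} [Group G] {f : G}

theorem conj_eq_conj_iff_inv_mul_mem_centralizer {c d : G} :
    c * f * c⁻¹ = d * f * d⁻¹ ↔ d⁻¹ * c ∈ Subgroup.centralizer {f} := by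
  rw [Subgroup.mem_centralizer_singleton_iff, mul_inv_eq_iff_eq_mul, mul_assoc d⁻¹,
    inv_mul_eq_iff_eq_mul]
  simp only [mul_assoc]

theorem conj_eq_self_iff_mem_centralizer {c : G} :
    c * f * c⁻¹ = f ↔ c ∈ Subgroup.centralizer {f} := by
  simpa using conj_eq_conj_iff_inv_mul_mem_centralizer (f := f) (c := c) (d := 1)

theorem mul_conj_eq_conj_of_mem_centralizer (c : G) {t : G} (ht : t ∈ Subgroup.centralizer {f}) :
    (c * t) * f * (c * t)⁻¹ = c * f * c⁻¹ :=
  conj_eq_conj_iff_inv_mul_mem_centralizer.2 (by simpa using ht)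

end Centralizer

namespace ZfObj

variable (Z : ZfObj k G α f)

theorem mem_range_p_iff {x : G} {v : Z.V} : v ∈ LinearMap.range (Z.p x) ↔ Z.p x v = v :=
  LinearMap.IsIdempotentElem.mem_range_iff (Z.p_idem x)

theorem sum_p_apply (v : Z.V) : ∑ g, Z.p g v = v := by
  rw [← LinearMap.sum_apply, Z.p_total, LinearMap.id_apply]

theorem p_apply_eq_zero_of_mem_range {x y : G} (hxy : x ≠ y) {v : Z.V}
    (hv : v ∈ LinearMap.range (Z.p y)) : Z.p x v = 0 := by
  obtain ⟨w, rfl⟩ := hv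
  exact LinearMap.congr_fun (Z.p_orth x y hxy) w

theorem ρ_mem_range_p (g : G) {x : G} {v : Z.V} (hv : v ∈ LinearMap.range (Z.p x)) :
    Z.ρ g v ∈ LinearMap.range (Z.p (g * x * g⁻¹)) := by
  obtain ⟨w, rfl⟩ := hv
  exact ⟨Z.ρ g w, (LinearMap.congr_fun (Z.grade g x) w).symm⟩

theorem ρ_mul_apply (g h : G) {x : G} {v : Z.V} (hv : v ∈ LinearMap.range (Z.p x)) :
    Z.ρ (g * h) v = aux2 α g h x • Z.ρ g (Z.ρ h v) := by
  obtain ⟨w, rfl⟩ := hv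
  exact LinearMap.congr_fun (Z.proj g h x) w

theorem ρ_ρ_apply (g h : G) {x : G} {v : Z.V} (hv : v ∈ LinearMap.range (Z.p x)) :
    Z.ρ g (Z.ρ h v) = (aux2 α g h x)⁻¹ • Z.ρ (g * h) v := by
  rw [Z.ρ_mul_apply g h hv, inv_smul_smul]

variable {Z} in
theorem linearMap_ext {U : Type*} [AddCommGroup U] [Module k U] {A B : Z.V →ₗ[k] U}
    (h : ∀ c, ∀ z ∈ LinearMap.range (Z.p f), A (Z.ρ c z) = B (Z.ρ c z)) : A = B := by
  ext v
  rw [← Z.sum_p_apply v, map_sum, map_sum]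
  refine Finset.sum_congr rfl fun g _ => ?_
  by_cases hg : IsConj f g
  · obtain ⟨c, rfl⟩ := isConj_iff.1 hg
    obtain ⟨w, rfl⟩ := (Z.ρ_bij c).surjective v
    have grade_w : Z.ρ c (Z.p f w) = Z.p (c * f * c⁻¹) (Z.ρ c w) :=
      LinearMap.congr_fun (Z.grade c f) w
    rw [← grade_w]
    exact h c _ ⟨w, rfl⟩
  · rw [Z.supp g hg, LinearMap.zero_apply, map_zero, map_zero]

end ZfObj

theorem ZfHom.apply_ρ {Z W : ZfObj k G α f} (a : ZfHom Z W) (g : G) (v : Z.V) :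
    a.φ (Z.ρ g v) = W.ρ g (a.φ v) :=
  LinearMap.congr_fun (a.comm_ρ g) v

instance faithful_Dfun : (Dfun : ZfObj k G α f ⥤ RepObj k G α f).Faithful where
  map_injective {Z W} (a b : ZfHom Z W) hab := by
    have eq_on_component : ∀ z ∈ LinearMap.range (Z.p f), a.φ z = b.φ z := fun z hz =>
      congrArg Subtype.val (LinearMap.congr_fun (congrArg RepHom.φ hab) ⟨z, hz⟩)
    refine ZfHom.ext (ZfObj.linearMap_ext fun c z hz => ?_)
    rw [a.apply_ρ, b.apply_ρ, eq_on_component z hz]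

section Extension

namespace ZfObj

variable {Z W : ZfObj k G α f} (ψ : LinearMap.range (Z.p f) →ₗ[k] LinearMap.range (W.p f))

/-- The map `Z.V → W.V` which is the conjugate of `ψ : Z_f → W_f` by the action of `c` on the
component of degree `c f c⁻¹`, and zero on the other components. -/
noncomputable def conjugate (c : G) : Z.V →ₗ[k] W.V :=
  W.ρ c ∘ₗ (LinearMap.range (W.p f)).subtype ∘ₗ ψ ∘ₗ (Z.p f).rangeRestrict ∘ₗ
    (LinearEquiv.ofBijective (Z.ρ c) (Z.ρ_bij c)).symm.toLinearMap

theorem conjugate_ρ_self (c : G) (z : LinearMap.range (Z.p f)) :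
    conjugate ψ c (Z.ρ c z) = W.ρ c (ψ z) := by
  have inv_ρ : (LinearEquiv.ofBijective (Z.ρ c) (Z.ρ_bij c)).symm (Z.ρ c z) = z :=
    LinearEquiv.ofBijective_symm_apply_apply _ _
  have restrict_z : (Z.p f).rangeRestrict z = z := Subtype.ext (Z.mem_range_p_iff.1 z.2)
  simp only [conjugate, LinearMap.comp_apply, LinearEquiv.coe_coe, inv_ρ, restrict_z,
    Submodule.subtype_apply]

/-- The extension of `ψ : Z_f → W_f` to the map `Z.V → W.V` which on the component of degree `h`
is `ψ` conjugated by a chosen `c` with `c f c⁻¹ = h`. -/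
noncomputable def extend : Z.V →ₗ[k] W.V :=
  ∑ h, conjugate ψ (Function.invFun (fun c => c * f * c⁻¹) h) ∘ₗ Z.p h

/-- Linear maps `Z_f → W_f` commuting with the action of the centralizer of `f`; these are the
maps underlying the morphisms `Dfun.obj Z ⟶ Dfun.obj W`. -/
def IsEquivariant : Prop :=
  ∀ (t : Subgroup.centralizer {f}) (z : LinearMap.range (Z.p f)),
    (ψ ⟨Z.ρ t z, mapsTo_range_p Z t z z.2⟩ : W.V) = W.ρ t (ψ z)

variable {ψ}

theorem IsEquivariant.conjugate_ρ (hψ : IsEquivariant ψ) {c d : G} (h : c * f * c⁻¹ = d * f * d⁻¹)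
    (z : LinearMap.range (Z.p f)) : conjugate ψ d (Z.ρ c z) = W.ρ c (ψ z) := by
  obtain ⟨t, rfl⟩ : ∃ t : Subgroup.centralizer {f}, c = d * t :=
    ⟨⟨d⁻¹ * c, conj_eq_conj_iff_inv_mul_mem_centralizer.1 h⟩, (mul_inv_cancel_left d c).symm⟩
  calc conjugate ψ d (Z.ρ (d * t) z)
      = aux2 α d t f • conjugate ψ d (Z.ρ d (Z.ρ t z)) := by
        rw [Z.ρ_mul_apply d t z.2, LinearMap.map_smul_of_tower]
    _ = aux2 α d t f • W.ρ d (W.ρ t (ψ z)) := by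
        rw [← hψ, ← conjugate_ρ_self]
    _ = W.ρ (d * t) (ψ z) := (W.ρ_mul_apply d t (ψ z).2).symm

theorem IsEquivariant.extend_ρ (hψ : IsEquivariant ψ) (c : G) (z : LinearMap.range (Z.p f)) :
    extend ψ (Z.ρ c z) = W.ρ c (ψ z) := by
  have ρ_mem := Z.ρ_mem_range_p c z.2
  rw [extend, LinearMap.sum_apply, Finset.sum_eq_single (c * f * c⁻¹)]
  · have conj_invFun := Function.invFun_eq (f := fun c => c * f * c⁻¹) ⟨c, rfl⟩
    rw [LinearMap.comp_apply, Z.mem_range_p_iff.1 ρ_mem, hψ.conjugate_ρ conj_invFun.symm]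
  · intro h _ hne
    rw [LinearMap.comp_apply, Z.p_apply_eq_zero_of_mem_range hne ρ_mem, map_zero]
  · simp

theorem IsEquivariant.extend_comp_p (hψ : IsEquivariant ψ) (h : G) :
    extend ψ ∘ₗ Z.p h = W.p h ∘ₗ extend ψ := by
  refine linearMap_ext fun c z hz => ?_
  have ρ_z_mem := Z.ρ_mem_range_p c hz
  have ρ_ψz_mem := W.ρ_mem_range_p c (ψ ⟨z, hz⟩).2
  rw [LinearMap.comp_apply, LinearMap.comp_apply, hψ.extend_ρ c ⟨z, hz⟩]
  obtain rfl | hne := eq_or_ne h (c * f * c⁻¹)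
  · rw [Z.mem_range_p_iff.1 ρ_z_mem, W.mem_range_p_iff.1 ρ_ψz_mem, hψ.extend_ρ c ⟨z, hz⟩]
  · rw [Z.p_apply_eq_zero_of_mem_range hne ρ_z_mem, W.p_apply_eq_zero_of_mem_range hne ρ_ψz_mem,
      map_zero]

theorem IsEquivariant.extend_comp_ρ (hψ : IsEquivariant ψ) (g : G) :
    extend ψ ∘ₗ Z.ρ g = W.ρ g ∘ₗ extend ψ := by
  refine linearMap_ext fun c z hz => ?_
  rw [LinearMap.comp_apply, LinearMap.comp_apply, Z.ρ_ρ_apply g c hz,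
    LinearMap.map_smul_of_tower, hψ.extend_ρ (g * c) ⟨z, hz⟩, hψ.extend_ρ c ⟨z, hz⟩,
    W.ρ_ρ_apply g c (ψ ⟨z, hz⟩).2]

end ZfObj

instance full_Dfun : (Dfun : ZfObj k G α f ⥤ RepObj k G α f).Full where
  map_surjective {Z W} (ψ : RepHom (Dfun.obj Z) (Dfun.obj W)) := by
    have hψ : ZfObj.IsEquivariant (Z := Z) (W := W) ψ.φ := fun t z =>
      congrArg Subtype.val (LinearMap.congr_fun (ψ.comm_u t) z)
    refine ⟨⟨ZfObj.extend ψ.φ, hψ.extend_comp_p, hψ.extend_comp_ρ⟩, ?_⟩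
    refine RepHom.ext (LinearMap.ext fun (z : LinearMap.range (Z.p f)) => Subtype.ext ?_)
    have extend_z := hψ.extend_ρ 1 z
    rwa [Z.ρ_one, W.ρ_one] at extend_z

end Extension

section FunctionSpace

variable {k G : Type*} [CommSemiring k] [Group G] {f : G}
  {V : Type*} [AddCommMonoid V] [Module k V]

variable (k f V) in
open Classical in
/-- The projection of `G → V` onto its component of degree `h`, for the grading in which functions
supported at `c` have degree `c f c⁻¹`. -/
noncomputable def degreeProj (h : G) : (G → V) →ₗ[k] (G → V) :=
  LinearMap.pi fun c => if c * f * c⁻¹ = h then LinearMap.proj c else 0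

theorem degreeProj_apply_of_eq {h c : G} (hc : c * f * c⁻¹ = h) (F : G → V) :
    degreeProj k f V h F c = F c := by
  simp [degreeProj, hc]

theorem degreeProj_apply_of_ne {h c : G} (hc : c * f * c⁻¹ ≠ h) (F : G → V) :
    degreeProj k f V h F c = 0 := by
  simp [degreeProj, hc]

theorem degreeProj_comp_self (h : G) :
    degreeProj k f V h ∘ₗ degreeProj k f V h = degreeProj k f V h := by
  ext1 F
  funext c
  by_cases hc : c * f * c⁻¹ = h
  · exact degreeProj_apply_of_eq hc _
  · rw [LinearMap.comp_apply, degreeProj_apply_of_ne hc, degreeProj_apply_of_ne hc]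

theorem degreeProj_comp_of_ne {h l : G} (hl : h ≠ l) :
    degreeProj k f V h ∘ₗ degreeProj k f V l = 0 := by
  ext1 F
  funext c
  rw [LinearMap.comp_apply, LinearMap.zero_apply, Pi.zero_apply]
  by_cases hc : c * f * c⁻¹ = h
  · rw [degreeProj_apply_of_eq hc, degreeProj_apply_of_ne (hc.trans_ne hl)]
  · exact degreeProj_apply_of_ne hc _

theorem sum_degreeProj [Fintype G] : ∑ h, degreeProj k f V h = LinearMap.id := by
  ext1 F
  funext c
  rw [LinearMap.sum_apply, Finset.sum_apply, Finset.sum_eq_single (c * f * c⁻¹)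
    (fun h _ hne => degreeProj_apply_of_ne hne.symm F) (by simp), degreeProj_apply_of_eq rfl,
    LinearMap.id_apply]

theorem degreeProj_eq_zero {h : G} (hh : ¬IsConj f h) : degreeProj k f V h = 0 := by
  ext1 F
  funext c
  exact degreeProj_apply_of_ne (fun hc => hh (isConj_iff.2 ⟨c, hc⟩)) F

variable (f V) in
/-- Left translation by `g` on `G → V`, twisted by `τ`: the value at `g c` of the translate of
`F` is `(τ g c f)⁻¹ • F c`. -/
def twistedTranslate (τ : G → G → G → kˣ) (g : G) : (G → V) ≃ₗ[k] (G → V) :=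
  LinearEquiv.piCongrRight (fun c => LinearEquiv.smulOfUnit (τ g c f)⁻¹) ≪≫ₗ
    LinearEquiv.funCongrLeft k V (Equiv.mulLeft g⁻¹)

variable {τ : G → G → G → kˣ}

theorem twistedTranslate_apply_mul (g c : G) (F : G → V) :
    twistedTranslate f V τ g F (g * c) = (τ g c f)⁻¹ • F c := by
  change (τ g (g⁻¹ * (g * c)) f)⁻¹ • F (g⁻¹ * (g * c)) = _
  rw [inv_mul_cancel_left]

theorem twistedTranslate_one (hτ : IsNormalizedTwoCocycle τ) :
    (twistedTranslate f V τ 1).toLinearMap = LinearMap.id := by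
  ext1 F
  funext c
  simpa [hτ.one_left] using twistedTranslate_apply_mul (τ := τ) (f := f) 1 c F

theorem twistedTranslate_comp_degreeProj (g h : G) :
    (twistedTranslate f V τ g).toLinearMap ∘ₗ degreeProj k f V h =
      degreeProj k f V (g * h * g⁻¹) ∘ₗ (twistedTranslate f V τ g).toLinearMap := by
  ext1 F
  funext c
  obtain ⟨d, rfl⟩ := (Group.mulLeft_bijective g).surjective c
  have conj_iff : g * d * f * (g * d)⁻¹ = g * h * g⁻¹ ↔ d * f * d⁻¹ = h := by
    rw [← (conj_injective (x := g)).eq_iff (b := h)]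
    simp only [mul_inv_rev, mul_assoc]
  simp only [LinearMap.comp_apply, LinearEquiv.coe_coe, twistedTranslate_apply_mul]
  by_cases hd : d * f * d⁻¹ = h
  · rw [degreeProj_apply_of_eq hd, degreeProj_apply_of_eq (conj_iff.2 hd),
      twistedTranslate_apply_mul]
  · rw [degreeProj_apply_of_ne hd, degreeProj_apply_of_ne (conj_iff.not.2 hd), smul_zero]

theorem twistedTranslate_mul_comp_degreeProj (hτ : IsNormalizedTwoCocycle τ) (g h x : G) :
    (twistedTranslate f V τ (g * h)).toLinearMap ∘ₗ degreeProj k f V x =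
      (τ g h x : k) • (((twistedTranslate f V τ g).toLinearMap ∘ₗ
        (twistedTranslate f V τ h).toLinearMap) ∘ₗ degreeProj k f V x) := by
  ext1 F
  funext c
  obtain ⟨d, rfl⟩ := (Group.mulLeft_bijective (g * h)).surjective c
  simp only [LinearMap.comp_apply, LinearMap.smul_apply, LinearEquiv.coe_coe, Pi.smul_apply,
    ← Units.smul_def, twistedTranslate_apply_mul, mul_assoc g h d]
  rw [← mul_assoc, twistedTranslate_apply_mul]
  by_cases hd : d * f * d⁻¹ = x
  · subst hd
    rw [smul_smul, smul_smul]
    congr 1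
    rw [inv_eq_iff_mul_eq_one, mul_assoc, ← mul_inv, ← mul_assoc, hτ.cocycle, mul_inv_cancel]
  · simp only [degreeProj_apply_of_ne hd, smul_zero]

end FunctionSpace

section Coinduction

variable {k : Type} [Field k] {G : Type} [Group G] {α : G → G → G → kˣ} {f : G}

theorem RepHom.isIso_of_bijective {M N : RepObj k G α f} (a : M ⟶ N)
    (ha : Function.Bijective (RepHom.φ a)) : IsIso a := by
  let e := LinearEquiv.ofBijective (RepHom.φ a) ha
  have symm_comp_u (t : Subgroup.centralizer {f}) :
      e.symm.toLinearMap ∘ₗ N.u t = M.u t ∘ₗ e.symm.toLinearMap := by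
    rw [LinearEquiv.toLinearMap_symm_comp_eq, ← LinearMap.comp_assoc,
      LinearEquiv.eq_comp_toLinearMap_symm]
    exact (RepHom.comm_u a t).symm
  exact ⟨⟨e.symm.toLinearMap, symm_comp_u⟩, RepHom.ext (LinearMap.ext e.symm_apply_apply),
    RepHom.ext (LinearMap.ext e.apply_symm_apply)⟩

namespace RepObj

variable (M : RepObj k G α f)

theorem u_u_apply (s t : Subgroup.centralizer {f}) (m : M.M) :
    M.u s (M.u t m) = (aux2 α s t f)⁻¹ • M.u (s * t) m :=
  LinearMap.congr_fun (M.u_mul s t) m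

theorem bijective_u (t : Subgroup.centralizer {f}) : Function.Bijective (M.u t) := by
  constructor
  · intro m n hmn
    have u_inv_u := congrArg (M.u t⁻¹) hmn
    simpa only [u_u_apply, inv_mul_cancel, M.u_one, LinearMap.id_apply, smul_left_cancel_iff]
      using u_inv_u
  · intro m
    refine ⟨aux2 α t ↑t⁻¹ f • M.u t⁻¹ m, ?_⟩
    rw [LinearMap.map_smul_of_tower, u_u_apply, smul_inv_smul, mul_inv_cancel, M.u_one,
      LinearMap.id_apply]

/-- The coinduced space of `M`: functions `F : G → M` which are equivariant under right
translation by the centralizer of `f`. The value `F c` plays the role of `(ρ c)⁻¹ v`, where `v` is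
the component of degree `c f c⁻¹` of the vector which `F` represents. -/
def equivariantFunctions : Submodule k (G → M.M) where
  carrier := {F | ∀ (c : G) (t : Subgroup.centralizer {f}),
    aux2 α c t f • M.u t (F (c * t)) = F c}
  add_mem' {F F'} hF hF' c t := by simp only [Pi.add_apply, map_add, smul_add, hF c t, hF' c t]
  zero_mem' c t := by simp only [Pi.zero_apply, map_zero, smul_zero]
  smul_mem' r F hF c t := by simp only [Pi.smul_apply, map_smul, smul_comm _ r, hF c t]

variable {M} {F : G → M.M}

theorem degreeProj_mem_equivariantFunctions (h : G) (hF : F ∈ M.equivariantFunctions) :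
    degreeProj k f M.M h F ∈ M.equivariantFunctions := by
  intro c t
  have conj_mul := mul_conj_eq_conj_of_mem_centralizer c t.2
  by_cases hc : c * f * c⁻¹ = h
  · rw [degreeProj_apply_of_eq hc, degreeProj_apply_of_eq (conj_mul.trans hc), hF c t]
  · rw [degreeProj_apply_of_ne hc, degreeProj_apply_of_ne (conj_mul.trans_ne hc), map_zero,
      smul_zero]

theorem twistedTranslate_mem_equivariantFunctions_iff (hα : IsNormalizedTwoCocycle (aux2 α))
    (g : G) : twistedTranslate f M.M (aux2 α) g F ∈ M.equivariantFunctions ↔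
      F ∈ M.equivariantFunctions := by
  refine (Group.mulLeft_bijective g).surjective.forall.trans (forall₂_congr fun c t => ?_)
  have cocycle_t := hα.cocycle g c t f
  rw [conj_eq_self_iff_mem_centralizer.2 t.2] at cocycle_t
  have scalar_eq : aux2 α (g * c) t f * (aux2 α g (c * t) f)⁻¹ =
      (aux2 α g c f)⁻¹ * aux2 α c t f := by
    rw [mul_inv_eq_iff_eq_mul, mul_assoc, eq_inv_mul_iff_mul_eq, mul_comm, cocycle_t, mul_comm]
  rw [mul_assoc, twistedTranslate_apply_mul, twistedTranslate_apply_mul,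
    LinearMap.map_smul_of_tower, smul_smul, scalar_eq, mul_smul, smul_left_cancel_iff]

theorem u_apply_of_mem_equivariantFunctions (hα : IsNormalizedTwoCocycle (aux2 α))
    (hF : F ∈ M.equivariantFunctions) (t : Subgroup.centralizer {f}) : M.u t (F t) = F 1 := by
  simpa only [hα.one_left, one_smul, one_mul] using hF 1 t

theorem twistedTranslate_apply_one (hα : IsNormalizedTwoCocycle (aux2 α))
    (hF : F ∈ M.equivariantFunctions) (t : Subgroup.centralizer {f}) :
    twistedTranslate f M.M (aux2 α) t F 1 = M.u t (F 1) := by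
  have translate_t : twistedTranslate f M.M (aux2 α) t F t = F 1 := by
    simpa only [mul_one, hα.one_right, inv_one, one_smul] using
      twistedTranslate_apply_mul (τ := aux2 α) (f := f) (t : G) 1 F
  rw [← translate_t, u_apply_of_mem_equivariantFunctions hα
    ((twistedTranslate_mem_equivariantFunctions_iff hα _).2 hF)]

variable (M) in
/-- The element of the coinduced space of degree `f` with value `m` at `1`: it is `t ↦ u_t⁻¹ m` on
the centralizer of `f`, and vanishes elsewhere. -/
noncomputable def equivariantExtension (m : M.M) : G → M.M :=
  Function.extend Subtype.val
    (fun t => (LinearEquiv.ofBijective (M.u t) (M.bijective_u t)).symm m) 0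

theorem u_equivariantExtension (m : M.M) (t : Subgroup.centralizer {f}) :
    M.u t (M.equivariantExtension m t) = m := by
  rw [equivariantExtension, Subtype.val_injective.extend_apply]
  exact (LinearEquiv.ofBijective (M.u t) (M.bijective_u t)).apply_symm_apply m

theorem equivariantExtension_of_notMem (m : M.M) {c : G} (hc : c ∉ Subgroup.centralizer {f}) :
    M.equivariantExtension m c = 0 :=
  Function.extend_apply' _ _ _ fun ⟨t, ht⟩ => hc (ht ▸ t.2)

theorem equivariantExtension_mem (m : M.M) :
    M.equivariantExtension m ∈ M.equivariantFunctions := by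
  intro c t
  by_cases hc : c ∈ Subgroup.centralizer {f}
  · lift c to Subgroup.centralizer {f} using hc
    apply (M.bijective_u c).injective
    rw [LinearMap.map_smul_of_tower, u_u_apply, smul_inv_smul, ← Subgroup.coe_mul,
      u_equivariantExtension, u_equivariantExtension]
  · have hct : c * t ∉ Subgroup.centralizer {f} :=
      (Subgroup.mul_mem_cancel_right _ t.2).not.2 hc
    rw [equivariantExtension_of_notMem m hc, equivariantExtension_of_notMem m hct, map_zero,
      smul_zero]

theorem degreeProj_equivariantExtension (m : M.M) :
    degreeProj k f M.M f (M.equivariantExtension m) = M.equivariantExtension m := by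
  funext c
  by_cases hc : c * f * c⁻¹ = f
  · exact degreeProj_apply_of_eq hc _
  · rw [degreeProj_apply_of_ne hc,
      equivariantExtension_of_notMem m (conj_eq_self_iff_mem_centralizer.not.1 hc)]

theorem eq_zero_of_apply_one_eq_zero (hα : IsNormalizedTwoCocycle (aux2 α))
    (hF : F ∈ M.equivariantFunctions) (hFf : degreeProj k f M.M f F = F) (hF1 : F 1 = 0) :
    F = 0 := by
  funext c
  by_cases hc : c * f * c⁻¹ = f
  · lift c to Subgroup.centralizer {f} using conj_eq_self_iff_mem_centralizer.1 hc
    apply (M.bijective_u c).injective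
    rw [u_apply_of_mem_equivariantFunctions hα hF, hF1, Pi.zero_apply, map_zero]
  · rw [← hFf, degreeProj_apply_of_ne hc, Pi.zero_apply]

end RepObj

end Coinduction

section EssSurj

namespace RepObj

variable (hα : IsNormalizedTwoCocycle (aux2 α)) (M : RepObj k G α f)

/-- The object of `Z_f(G,α)` coinduced from a module over the twisted group algebra of the
centralizer of `f`. -/
noncomputable def coind : ZfObj k G α f where
  V := M.equivariantFunctions
  p h := (degreeProj k f M.M h).restrict fun _ => degreeProj_mem_equivariantFunctions h
  p_idem h := LinearMap.ext fun F =>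
    Subtype.ext (LinearMap.congr_fun (degreeProj_comp_self h) F.1)
  p_orth h l hl := LinearMap.ext fun F =>
    Subtype.ext (LinearMap.congr_fun (degreeProj_comp_of_ne hl) F.1)
  p_total := LinearMap.ext fun F => Subtype.ext <| by
    simpa using LinearMap.congr_fun sum_degreeProj F.1
  ρ g := (twistedTranslate f M.M (aux2 α) g).toLinearMap.restrict fun _ =>
    (twistedTranslate_mem_equivariantFunctions_iff hα g).2
  ρ_one := LinearMap.ext fun F => Subtype.ext (LinearMap.congr_fun (twistedTranslate_one hα) F.1)
  ρ_bij g := by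
    let T := twistedTranslate f M.M (aux2 α) g
    refine ⟨fun F F' h => Subtype.ext (T.injective (congrArg Subtype.val h)), fun F => ?_⟩
    have symm_mem : T.symm F.1 ∈ M.equivariantFunctions :=
      (twistedTranslate_mem_equivariantFunctions_iff hα g).1 (by simp [T])
    exact ⟨⟨T.symm F.1, symm_mem⟩, Subtype.ext (T.apply_symm_apply F.1)⟩
  grade g h := LinearMap.ext fun F =>
    Subtype.ext (LinearMap.congr_fun (twistedTranslate_comp_degreeProj g h) F.1)
  proj g h x := LinearMap.ext fun F =>
    Subtype.ext (LinearMap.congr_fun (twistedTranslate_mul_comp_degreeProj hα g h x) F.1)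
  supp h hh := LinearMap.ext fun F =>
    Subtype.ext (LinearMap.congr_fun (degreeProj_eq_zero hh) F.1)

/-- The counit of coinduction: evaluation at `1` of functions of degree `f`. -/
noncomputable def coindCounit : RepHom (Dfun.obj (M.coind hα)) M where
  φ := LinearMap.proj 1 ∘ₗ M.equivariantFunctions.subtype ∘ₗ
    (LinearMap.range ((M.coind hα).p f)).subtype
  comm_u t := LinearMap.ext fun (F : LinearMap.range ((M.coind hα).p f)) =>
    twistedTranslate_apply_one hα F.1.2 t

theorem bijective_coindCounit : Function.Bijective (M.coindCounit hα).φ := by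
  constructor
  · refine (injective_iff_map_eq_zero _).2
      fun (F : LinearMap.range ((M.coind hα).p f)) (hF1 : F.1.1 1 = 0) => ?_
    have degree_F := congrArg Subtype.val ((M.coind hα).mem_range_p_iff.1 F.2)
    exact Subtype.ext (Subtype.ext (eq_zero_of_apply_one_eq_zero hα F.1.2 degree_F hF1))
  · intro m
    let F : M.equivariantFunctions := ⟨M.equivariantExtension m, equivariantExtension_mem m⟩
    have degree_F : (M.coind hα).p f F = F := Subtype.ext (degreeProj_equivariantExtension m)
    refine ⟨⟨F, (M.coind hα).mem_range_p_iff.2 degree_F⟩, ?_⟩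
    have u_one_F := u_equivariantExtension m 1
    rwa [M.u_one] at u_one_F

end RepObj

theorem essSurj_Dfun (hα : IsNormalizedTwoCocycle (aux2 α)) :
    (Dfun : ZfObj k G α f ⥤ RepObj k G α f).EssSurj where
  mem_essImage M :=
    have : IsIso (C := RepObj k G α f) (M.coindCounit hα) :=
      RepHom.isIso_of_bijective _ (M.bijective_coindCounit hα)
    ⟨M.coind hα, ⟨asIso (C := RepObj k G α f) (M.coindCounit hα)⟩⟩

end EssSurj

theorem stmt6_general (hα : IsNormalizedTwoCocycle (aux2 α)) :
    ∃ e : ZfObj k G α f ≌ RepObj k G α f, e.functor = Dfun :=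
  have := essSurj_Dfun (f := f) hα
  have : (Dfun : ZfObj k G α f ⥤ RepObj k G α f).IsEquivalence := {}
  ⟨Dfun.asEquivalence, rfl⟩

/-- the category `Z_f(G,α)` of objects of `Z(G,α)` supported on the
conjugacy class of `f` is equivalent, as a `k`-linear category, to the category of
modules over the twisted group algebra `k[C_G(f), α(·,·|f)⁻¹]`, via the (`k`-linear)
functor `Z ↦ Z_f` taking the degree-`f` component. -/
theorem stmt6
    (hcoc : ∀ f g h l : G,
      α g h l * α f (g * h) l * α f g h = α (f * g) h l * α f g (h * l))
    (hnorm : ∀ f g h : G, f = 1 ∨ g = 1 ∨ h = 1 → α f g h = 1) :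
    ∃ e : ZfObj k G α f ≌ RepObj k G α f, e.functor = Dfun := by
  exact stmt6_general (isNormalizedTwoCocycle_aux2 hcoc hnorm)
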